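/- Let (X,d) be a metric space, a ∈ X, r > 0, and S, T metrically nonspreading mappings of X into itself such that d(Sx, a) ≤ r and d(Tx, a) ≤ r for all x ∈ X. Let δ be a positive real number with δ ≥ (1 + 2√2)·r, and let U be the mapping of X into itself defined by Ux = Sx if d(x,a) ≤ δ and Ux = Tx otherwise. Then U is metrically nonspreading. -/

import Mathlib

/-!
Only pairs `x ∈ B̄_δ(a)`, `y ∉ B̄_δ(a)` need an argument. For them `p = S x` and `q = T y` lie in
`B̄_r(a)`, so `√2 · d(p, q) ≤ 2√2 · r ≤ δ - r ≤ d(p, y)`, and squaring shows that the single term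
`d(p, y)²` already dominates `2 · d(p, q)²`.
-/

open Metric Set

section

variable {X : Type*} [PseudoMetricSpace X] {S T : X → X} {s t : Set X}

/-- `T` satisfies the metrically nonspreading inequality for all pairs of points of `s`. The set `s`
is not required to be `T`-invariant, so that a piecewise map can be treated one piece at a time;
`s = Set.univ` gives the metrically nonspreading self-maps of `X`. -/
def MetricallyNonspreadingOn (T : X → X) (s : Set X) : Prop :=
  ∀ ⦃x⦄, x ∈ s → ∀ ⦃y⦄, y ∈ s → 2 * dist (T x) (T y) ^ 2 ≤ dist (T x) y ^ 2 + dist (T y) x ^ 2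

namespace MetricallyNonspreadingOn

theorem congr (hT : MetricallyNonspreadingOn T s) (hST : EqOn S T s) :
    MetricallyNonspreadingOn S s := by
  intro x hx y hy
  rw [hST hx, hST hy]
  exact hT hx hy

theorem union (hs : MetricallyNonspreadingOn T s) (ht : MetricallyNonspreadingOn T t)
    (hst : ∀ x ∈ s, ∀ y ∈ t, 2 * dist (T x) (T y) ^ 2 ≤ dist (T x) y ^ 2 + dist (T y) x ^ 2) :
    MetricallyNonspreadingOn T (s ∪ t) := by
  rintro x (hx | hx) y (hy | hy)
  · exact hs hx hy
  · exact hst x hx y hy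
  · rw [dist_comm (T x), add_comm]
    exact hst y hy x hx
  · exact ht hx hy

end MetricallyNonspreadingOn

theorem two_mul_dist_sq_le_dist_sq_of_mem_closedBall {a p q y : X} {r ρ : ℝ}
    (hp : p ∈ closedBall a r) (hq : q ∈ closedBall a ρ) (hy : r + √2 * (r + ρ) ≤ dist y a) :
    2 * dist p q ^ 2 ≤ dist p y ^ 2 := by
  have hpq : dist p q ≤ r + ρ := (dist_triangle_right p q a).trans (add_le_add hp hq)
  have hpy : dist y a - r ≤ dist p y := by
    linarith [dist_triangle_left y a p, mem_closedBall.mp hp]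
  have h : √2 * dist p q ≤ dist p y :=
    calc √2 * dist p q ≤ √2 * (r + ρ) := by gcongr
      _ ≤ dist y a - r := by linarith
      _ ≤ dist p y := hpy
  calc 2 * dist p q ^ 2 = (√2 * dist p q) ^ 2 := by
        rw [mul_pow, Real.sq_sqrt zero_le_two]
    _ ≤ dist p y ^ 2 := by gcongr

theorem stmt_4_general {U : X → X} {a : X} {r ρ δ : ℝ}
    (hS : MetricallyNonspreadingOn S (closedBall a δ))
    (hT : MetricallyNonspreadingOn T (closedBall a δ)ᶜ)
    (hSr : MapsTo S (closedBall a δ) (closedBall a r))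
    (hTρ : MapsTo T (closedBall a δ)ᶜ (closedBall a ρ))
    (hδ : r + √2 * (r + ρ) ≤ δ)
    (hUS : EqOn U S (closedBall a δ)) (hUT : EqOn U T (closedBall a δ)ᶜ) :
    MetricallyNonspreadingOn U univ := by
  rw [← union_compl_self (closedBall a δ)]
  refine (hS.congr hUS).union (hT.congr hUT) fun x hx y hy ↦ ?_
  rw [hUS hx, hUT hy]
  have hya : δ < dist y a := not_le.mp hy
  exact (two_mul_dist_sq_le_dist_sq_of_mem_closedBall (hSr hx) (hTρ hy) (hδ.trans hya.le)).trans
    (le_add_of_nonneg_right (sq_nonneg _))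

end

/-- Gluing two metrically nonspreading mappings whose ranges lie in a ball `B̄_r(a)`
along a ball `B̄_δ(a)` with `δ ≥ (1 + 2√2)·r` yields a metrically nonspreading mapping. -/
theorem stmt_4 {X : Type*} [MetricSpace X] (a : X) (r : ℝ) (hr : 0 < r)
    (S T : X → X)
    (hS : ∀ x y : X, 2 * dist (S x) (S y) ^ 2 ≤ dist (S x) y ^ 2 + dist (S y) x ^ 2)
    (hT : ∀ x y : X, 2 * dist (T x) (T y) ^ 2 ≤ dist (T x) y ^ 2 + dist (T y) x ^ 2)
    (hSr : ∀ x : X, dist (S x) a ≤ r) (hTr : ∀ x : X, dist (T x) a ≤ r)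
    (δ : ℝ) (hδ0 : 0 < δ) (hδ : (1 + 2 * Real.sqrt 2) * r ≤ δ)
    (U : X → X)
    (hU₁ : ∀ x : X, dist x a ≤ δ → U x = S x)
    (hU₂ : ∀ x : X, ¬ dist x a ≤ δ → U x = T x) :
    ∀ x y : X, 2 * dist (U x) (U y) ^ 2 ≤ dist (U x) y ^ 2 + dist (U y) x ^ 2 :=
  fun x y ↦ stmt_4_general (fun x _ y _ ↦ hS x y) (fun x _ y _ ↦ hT x y) (fun x _ ↦ hSr x)
    (fun x _ ↦ hTr x) (by linarith) hU₁ hU₂ (mem_univ x) (mem_univ y)
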